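/- Let f : (Fin m → ℝ) → ℝ be Fréchet differentiable at a point z with partial derivatives v i = D f z (e i), and let M be a real m × n matrix. Define h(ε) = sup over all δ : Fin n → ℝ with ‖δ‖∞ ≤ ε of |f(z + M.mulVec δ) − f(z)|. Then h(ε) = ε * ∑ j, |∑ i, v i * M i j| + o(ε) as ε → 0⁺; that is, (h(ε) − ε * ‖Mᵀ.mulVec v‖₁) / ε tends to 0 as ε tends to 0 from the right. (Precise first-order form of Eq. (14) of the paper: the maximal loss change from a lower-layer perturbation with budget ε, propagated through a differentiable layer fraction whose Jacobian at z is M, equals ε times the ℓ1 norm of the pulled-back gradient.) -/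

import Mathlib

/-!
To first order at `x`, the change `g (x + δ) - g x` is `g' δ`, with an error at most `c * ε` on the
ball of radius `ε`. Suprema are stable under uniform perturbation, and the supremum of `‖g' δ‖`
over that ball is `ε * ‖g'‖`; so the maximal change of `g` is `ε * ‖g'‖ + o(ε)` in any normed space.
When the perturbations carry the `ℓ∞` norm, `‖g'‖` is the dual, i.e. `ℓ1`, norm of the gradient.
-/

open Asymptotics Filter Metric Topology

lemma abs_sSup_image_sub_le_of_isLUB {α : Type*} {s : Set α} {u w : α → ℝ} {b c : ℝ}
    (hw : IsLUB (w '' s) b) (huw : ∀ a ∈ s, |u a - w a| ≤ c) : |sSup (u '' s) - b| ≤ c := by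
  have hne : s.Nonempty := hw.nonempty.of_image
  have hu : b + c ∈ upperBounds (u '' s) := Set.forall_mem_image.2 fun a ha ↦ by
    linarith [(abs_le.1 (huw a ha)).2, hw.1 (Set.mem_image_of_mem w ha)]
  have hw' : sSup (u '' s) + c ∈ upperBounds (w '' s) := Set.forall_mem_image.2 fun a ha ↦ by
    linarith [(abs_le.1 (huw a ha)).1, le_csSup ⟨_, hu⟩ (Set.mem_image_of_mem u ha)]
  exact abs_sub_le_iff.2 ⟨sub_le_iff_le_add'.2 (csSup_le (hne.image u) hu),
    sub_le_iff_le_add'.2 (hw.2 hw')⟩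

lemma isLUB_norm_image_closedBall {𝕜 E F : Type*} [RCLike 𝕜] [NormedAddCommGroup E]
    [NormedSpace 𝕜 E] [SeminormedAddCommGroup F] [NormedSpace 𝕜 F] (L : E →L[𝕜] F) {ε : ℝ}
    (hε : 0 < ε) : IsLUB ((fun δ ↦ ‖L δ‖) '' closedBall 0 ε) (ε * ‖L‖) := by
  constructor
  · rintro _ ⟨δ, hδ, rfl⟩
    rw [mul_comm]
    exact L.le_opNorm_of_le (mem_closedBall_zero_iff.1 hδ)
  · intro b hb
    rw [← le_div_iff₀' hε]
    by_contra! hlt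
    obtain ⟨u, hu, hbu⟩ := L.exists_lt_apply_of_lt_opNorm hlt
    have hmem : (ε : 𝕜) • u ∈ closedBall 0 ε := by
      rw [mem_closedBall_zero_iff, norm_smul, RCLike.norm_ofReal, abs_of_pos hε]
      exact mul_le_of_le_one_right hε.le hu.le
    have hle : ε * ‖L u‖ ≤ b := by
      simpa [norm_smul, abs_of_pos hε] using hb ⟨_, hmem, rfl⟩
    exact hbu.not_ge ((le_div_iff₀' hε).2 hle)

attribute [local instance] Matrix.linftyOpNormedAddCommGroup in
lemma opNorm_eq_sum_norm_apply_single {𝕜 ι : Type*} [NontriviallyNormedField 𝕜] [NormedAlgebra ℝ 𝕜]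
    [Fintype ι] [DecidableEq ι] (L : (ι → 𝕜) →L[𝕜] 𝕜) :
    ‖L‖ = ∑ j, ‖L (Pi.single j 1)‖ := by
  -- The matrix of `T` has a single row, so its `ℓ∞ → ℓ∞` operator norm is one row sum.
  let T : (ι → 𝕜) →L[𝕜] (Unit → 𝕜) := ContinuousLinearMap.pi fun _ ↦ L
  have hT : ‖L‖ = ‖T‖ := L.opNorm_ext T fun x ↦ (pi_norm_const (ι := Unit) (L x)).symm
  rw [hT, ← Matrix.linfty_opNorm_toMatrix T, Matrix.linfty_opNorm_def]
  simp [T, LinearMap.toMatrix'_apply]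

lemma pi_norm_eq_iSup_norm {ι : Type*} [Fintype ι] {G : ι → Type*}
    [∀ i, SeminormedAddCommGroup (G i)] (δ : ∀ i, G i) : ‖δ‖ = ⨆ i, ‖δ i‖ := by
  refine le_antisymm ?_ (Real.iSup_le (norm_le_pi_norm δ) (norm_nonneg δ))
  exact (pi_norm_le_iff_of_nonneg (Real.iSup_nonneg fun i ↦ norm_nonneg (δ i))).2
    (le_ciSup (Set.finite_range fun i ↦ ‖δ i‖).bddAbove)

lemma map_mulVec_single_one {R ι κ N : Type*} [Semiring R] [AddCommMonoid N] [Module R N]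
    [Fintype ι] [Fintype κ] [DecidableEq ι] [DecidableEq κ] (L : (κ → R) →ₗ[R] N)
    (M : Matrix κ ι R) (j : ι) :
    L (M.mulVec (Pi.single j 1)) = ∑ i, M i j • L (Pi.single i 1) := by
  rw [Matrix.mulVec_single_one, pi_eq_sum_univ' (M.col j), map_sum]
  simp only [map_smul, Matrix.col_apply]

/-- The largest change in the value of `g` when its argument `x` is perturbed within the closed ball
of radius `ε`. It takes the junk value `0` when the changes are unbounded on the ball or `ε < 0`. -/
noncomputable def maxChange {E F : Type*} [SeminormedAddCommGroup E] [SeminormedAddCommGroup F]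
    (g : E → F) (x : E) (ε : ℝ) : ℝ :=
  sSup ((fun δ ↦ ‖g (x + δ) - g x‖) '' closedBall 0 ε)

theorem isLittleO_maxChange_sub_mul_opNorm {𝕜 E F : Type*} [RCLike 𝕜] [NormedAddCommGroup E]
    [NormedSpace 𝕜 E] [SeminormedAddCommGroup F] [NormedSpace 𝕜 F] {g : E → F}
    {g' : E →L[𝕜] F} {x : E} (hg : HasFDerivAt g g' x) :
    (fun ε ↦ maxChange g x ε - ε * ‖g'‖) =o[𝓝[>] 0] fun ε ↦ ε := by
  refine isLittleO_iff.2 fun c hc ↦ ?_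
  obtain ⟨r, hr, hlin⟩ := nhds_basis_ball.eventually_iff.1 (hg.isLittleO.def hc)
  filter_upwards [Ioo_mem_nhdsGT hr] with ε ⟨hε, hεr⟩
  rw [Real.norm_eq_abs, Real.norm_of_nonneg hε.le]
  refine abs_sSup_image_sub_le_of_isLUB (isLUB_norm_image_closedBall g' hε) fun δ hδ ↦ ?_
  rw [mem_closedBall_zero_iff] at hδ
  calc |‖g (x + δ) - g x‖ - ‖g' δ‖|
      ≤ ‖g (x + δ) - g x - g' δ‖ := abs_norm_sub_norm_le _ _
    _ ≤ c * ‖δ‖ := by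
        simpa using hlin (x := x + δ) (by simpa using hδ.trans_lt hεr)
    _ ≤ c * ε := by gcongr

theorem sup_loss_change_pullback_first_order_general {𝕜 ι E : Type*} [RCLike 𝕜] [Fintype ι]
    [DecidableEq ι] [NormedAddCommGroup E] [NormedSpace 𝕜 E] {f : E → 𝕜} {f' : E →L[𝕜] 𝕜}
    {φ : (ι → 𝕜) → E} {φ' : (ι → 𝕜) →L[𝕜] E} {x : ι → 𝕜}
    (hf : HasFDerivAt f f' (φ x)) (hφ : HasFDerivAt φ φ' x) :
    Tendsto (fun ε ↦ (maxChange (f ∘ φ) x ε - ε * ∑ j, ‖f' (φ' (Pi.single j 1))‖) / ε)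
      (𝓝[>] 0) (𝓝 0) := by
  have h_opNorm : ‖f' ∘L φ'‖ = ∑ j, ‖f' (φ' (Pi.single j 1))‖ :=
    opNorm_eq_sum_norm_apply_single (f' ∘L φ')
  rw [← h_opNorm]
  exact (isLittleO_maxChange_sub_mul_opNorm (hf.comp x hφ)).tendsto_div_nhds_zero

/-- First-order form of the maximal loss change from a lower-layer perturbation
propagated through a linear layer fraction with Jacobian `M`: if `f` is Fréchet
differentiable at `z` with partial derivatives `v i`, and `h ε` is the supremum of
`|f (z + M.mulVec δ) - f z|` over `‖δ‖∞ ≤ ε`, then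
`h ε = ε * ∑ j, |∑ i, v i * M i j| + o(ε)` as `ε → 0⁺`. -/
theorem sup_loss_change_pullback_first_order (m n : ℕ)
    (f : (Fin m → ℝ) → ℝ) (z : Fin m → ℝ)
    (hf : DifferentiableAt ℝ f z) (v : Fin m → ℝ)
    (hv : ∀ i, v i = fderiv ℝ f z (Pi.single i 1))
    (M : Matrix (Fin m) (Fin n) ℝ) (h : ℝ → ℝ)
    (hh : ∀ ε : ℝ, h ε =
      sSup {y : ℝ | ∃ δ : Fin n → ℝ, (⨆ j, |δ j|) ≤ ε ∧
        y = |f (z + M.mulVec δ) - f z|}) :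
    Filter.Tendsto (fun ε : ℝ => (h ε - ε * ∑ j, |∑ i, v i * M i j|) / ε)
      (nhdsWithin 0 (Set.Ioi 0)) (nhds 0) := by
  have hφ : HasFDerivAt (fun δ ↦ z + M.mulVec δ) M.mulVecLin.toContinuousLinearMap 0 :=
    M.mulVecLin.toContinuousLinearMap.hasFDerivAt.const_add z
  have h_eq : h = maxChange (f ∘ fun δ ↦ z + M.mulVec δ) 0 := by
    ext ε
    simp [hh, maxChange, Set.image, pi_norm_eq_iSup_norm, eq_comm]
  have h_pullback (j : Fin n) :
      ∑ i, v i * M i j = fderiv ℝ f z (M.mulVec (Pi.single j 1)) := by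
    simpa [hv, mul_comm] using (map_mulVec_single_one (fderiv ℝ f z).toLinearMap M j).symm
  have hf' : HasFDerivAt f (fderiv ℝ f z) (z + M.mulVec 0) := by simpa using hf.hasFDerivAt
  simpa [h_eq, h_pullback] using sup_loss_change_pullback_first_order_general
    (φ := fun δ ↦ z + M.mulVec δ) hf' hφ
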